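/- Let r > 1 be an integer. An atomic domain A is an r-congruence half-factorial domain if and only if every nonzero prime ideal of A contains an r-good atom. -/

import Mathlib

/-!
If `A` is an r-CHFD, no atomic equality is r-unbalanced, so every atom is r-good; a nonzero prime
contains a nonzero nonunit and hence one of its atomic factors.

Conversely, two facts are combined.

* `card_modEq_of_good`: an atomic equality with only r-good atoms on one side is r-balanced.
  It splits into irredundant atomic equalities, each of which involves an r-good atom and so is
  r-balanced.
* `exists_mul_eq_prod_good`: if every nonzero prime contains an r-good atom, every nonzero `x`
  divides a product of r-good atoms. Otherwise `(x)` would be disjoint from the multiplicative set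
  generated by the r-good atoms, and would lie in a prime ideal disjoint from that set.

Given factorizations `s` and `t` of `x`, choose `c` with `x * c` a product `g` of r-good atoms, and
factor `c` into a multiset `w` of atoms. The first fact gives
`card s + card w ≡ card g ≡ card t + card w`, and `card w` cancels.
-/

/-- An *atomic equality* `a₁⋯aₙ = b₁⋯bₘ` (n, m ≥ 1), encoded by two nonempty
multisets of irreducible elements with equal products. -/
def IsAtomicEquality {A : Type*} [CommRing A] (s t : Multiset A) : Prop :=
  s ≠ 0 ∧ t ≠ 0 ∧ (∀ a ∈ s, Irreducible a) ∧ (∀ b ∈ t, Irreducible b) ∧ s.prod = t.prod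

/-- The atomic equality given by `s` and `t` is *irredundant* if no product of a
nonempty proper sub-multiset of `s` is associated to a product of a nonempty proper
sub-multiset of `t`. -/
def IsIrredundant {A : Type*} [CommRing A] (s t : Multiset A) : Prop :=
  ∀ u v : Multiset A, u ≤ s → v ≤ t → u ≠ 0 → v ≠ 0 → u ≠ s → v ≠ t →
    ¬ Associated u.prod v.prod

/-- A *bad atom* is an irreducible element appearing in some irredundant unbalanced
atomic equality. -/
def IsBadAtom {A : Type*} [CommRing A] (x : A) : Prop :=
  Irreducible x ∧ ∃ s t : Multiset A, IsAtomicEquality s t ∧ IsIrredundant s t ∧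
    Multiset.card s ≠ Multiset.card t ∧ (x ∈ s ∨ x ∈ t)

/-- A *good atom* is an irreducible element that is not a bad atom. -/
def IsGoodAtom {A : Type*} [CommRing A] (x : A) : Prop :=
  Irreducible x ∧ ¬ IsBadAtom x

/-- A ring is *atomic* if every nonzero nonunit is a finite product of irreducible
elements. -/
def IsAtomicDomain (A : Type*) [CommRing A] : Prop :=
  ∀ x : A, x ≠ 0 → ¬ IsUnit x → ∃ s : Multiset A, (∀ a ∈ s, Irreducible a) ∧ s.prod = x

/-- An *HF-element*: all its factorizations into irreducible elements have the same
number of factors. -/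
def IsHFElement {A : Type*} [CommRing A] (x : A) : Prop :=
  ∀ s t : Multiset A, (∀ a ∈ s, Irreducible a) → (∀ b ∈ t, Irreducible b) →
    s.prod = x → t.prod = x → Multiset.card s = Multiset.card t

/-- A *half-factorial domain*: an atomic domain in which every nonzero nonunit is an
HF-element. -/
def IsHFD (A : Type*) [CommRing A] : Prop :=
  IsAtomicDomain A ∧ ∀ x : A, x ≠ 0 → ¬ IsUnit x → IsHFElement x

/-- An *r-bad atom* is an irreducible element appearing in some irredundant
r-unbalanced atomic equality, i.e. one whose two sides have numbers of factors that
are not congruent modulo `r`. -/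
def IsRBadAtom {A : Type*} [CommRing A] (r : ℕ) (x : A) : Prop :=
  Irreducible x ∧ ∃ s t : Multiset A, IsAtomicEquality s t ∧ IsIrredundant s t ∧
    ¬ (Multiset.card s ≡ Multiset.card t [MOD r]) ∧ (x ∈ s ∨ x ∈ t)

/-- An *r-good atom* is an irreducible element that is not an r-bad atom. -/
def IsRGoodAtom {A : Type*} [CommRing A] (r : ℕ) (x : A) : Prop :=
  Irreducible x ∧ ¬ IsRBadAtom r x

/-- An *r-congruence half-factorial domain (r-CHFD)*: an atomic domain in which, for
every nonzero nonunit `x`, the numbers of factors in all atomic factorizations of `x`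
are congruent modulo `r`. -/
def IsRCHFD (A : Type*) [CommRing A] (r : ℕ) : Prop :=
  IsAtomicDomain A ∧ ∀ x : A, x ≠ 0 → ¬ IsUnit x →
    ∀ s t : Multiset A, (∀ a ∈ s, Irreducible a) → (∀ b ∈ t, Irreducible b) →
      s.prod = x → t.prod = x → Multiset.card s ≡ Multiset.card t [MOD r]

/-- Allowing units, every nonzero element of an atomic domain factors into atoms up to
association. -/
lemma exists_associated_prod {A : Type*} [CommRing A] (hA : IsAtomicDomain A)
    (c : A) (hc : c ≠ 0) :
    ∃ w : Multiset A, (∀ a ∈ w, Irreducible a) ∧ Associated w.prod c := by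
  by_cases hu : IsUnit c
  · exact ⟨0, by simp, by simpa using (associated_one_iff_isUnit.2 hu).symm⟩
  · obtain ⟨s, hs, rfl⟩ := hA c hc hu
    exact ⟨s, hs, Associated.refl _⟩

lemma eq_zero_of_isUnit_prod {A : Type*} [CommRing A] {s : Multiset A}
    (hs : ∀ a ∈ s, Irreducible a) (h : IsUnit s.prod) : s = 0 := by
  by_contra hne
  obtain ⟨a, ha⟩ := Multiset.exists_mem_of_ne_zero hne
  exact (hs a ha).not_isUnit (isUnit_of_dvd_unit (Multiset.dvd_prod ha) h)

/-- A unit can be absorbed into one factor of a nonempty multiset of atoms. -/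
lemma exists_prod_eq_of_associated {A : Type*} [CommRing A] {s : Multiset A} {x : A}
    (hs : ∀ a ∈ s, Irreducible a) (h0 : s ≠ 0) (h : Associated s.prod x) :
    ∃ t : Multiset A, (∀ a ∈ t, Irreducible a) ∧ Multiset.card t = Multiset.card s ∧
      t.prod = x := by
  obtain ⟨u, rfl⟩ := h
  obtain ⟨a, ha⟩ := Multiset.exists_mem_of_ne_zero h0
  obtain ⟨s', rfl⟩ := Multiset.exists_cons_of_mem ha
  refine ⟨(a * u) ::ₘ s', ?_, by simp, by simp only [Multiset.prod_cons]; ring⟩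
  intro b hb
  rcases Multiset.mem_cons.1 hb with rfl | hb
  · exact (irreducible_mul_units u).2 (hs a ha)
  · exact hs b (Multiset.mem_cons_of_mem hb)

/-- An atomic equality, up to a unit, with only r-good atoms on one side is r-balanced. -/
lemma card_modEq_of_good {A : Type*} [CommRing A] [IsDomain A] (r : ℕ) (n : ℕ) :
    ∀ s g : Multiset A, Multiset.card s = n → (∀ a ∈ s, Irreducible a) →
      (∀ a ∈ g, IsRGoodAtom r a) → Associated s.prod g.prod →
      Multiset.card s ≡ Multiset.card g [MOD r] := by
  induction n using Nat.strong_induction_on with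
  | _ n ih =>
    intro s g hn hs hg h
    have hg' : ∀ a ∈ g, Irreducible a := fun a ha => (hg a ha).1
    by_cases hs0 : s = 0
    · subst hs0
      have : g = 0 := eq_zero_of_isUnit_prod hg' (h.isUnit (by simp))
      rw [this]
    by_cases hg0 : g = 0
    · subst hg0
      exact absurd (eq_zero_of_isUnit_prod hs (h.symm.isUnit (by simp))) hs0
    obtain ⟨t, ht, hcard, hprod⟩ := exists_prod_eq_of_associated hs hs0 h
    rw [← hcard] at hn ⊢
    have ht0 : t ≠ 0 := by
      rintro rfl
      exact hs0 (Multiset.card_eq_zero.1 (by simpa using hcard.symm))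
    by_cases hirr : IsIrredundant t g
    · by_contra hbal
      obtain ⟨a, ha⟩ := Multiset.exists_mem_of_ne_zero hg0
      exact (hg a ha).2 ⟨hg' a ha, t, g, ⟨ht0, hg0, ht, hg', hprod⟩, hirr, hbal, Or.inr ha⟩
    · -- Both the redundant part `u ~ v` and its complement `t - u ~ g - v` have fewer factors.
      simp only [IsIrredundant, not_forall, not_not] at hirr
      obtain ⟨u, v, hut, hvg, hu0, -, hut', -, huv⟩ := hirr
      obtain ⟨p, rfl⟩ := Multiset.le_iff_exists_add.1 hut
      obtain ⟨q, rfl⟩ := Multiset.le_iff_exists_add.1 hvg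
      have hu : ∀ a ∈ u, Irreducible a := fun a ha => ht a (Multiset.mem_add.2 (Or.inl ha))
      have hp : ∀ a ∈ p, Irreducible a := fun a ha => ht a (Multiset.mem_add.2 (Or.inr ha))
      have hv : ∀ a ∈ v, IsRGoodAtom r a := fun a ha => hg a (Multiset.mem_add.2 (Or.inl ha))
      have hq : ∀ a ∈ q, IsRGoodAtom r a := fun a ha => hg a (Multiset.mem_add.2 (Or.inr ha))
      have hp0 : p ≠ 0 := by
        rintro rfl
        simp at hut'
      have hup : u.prod ≠ 0 := Multiset.prod_ne_zero fun h0 => not_irreducible_zero (hu 0 h0)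
      have hpq : Associated p.prod q.prod := by
        rw [Multiset.prod_add, Multiset.prod_add] at hprod
        exact Associated.of_mul_left (Associated.of_eq hprod) huv hup
      have h1 := Multiset.card_pos.2 hu0
      have h2 := Multiset.card_pos.2 hp0
      rw [Multiset.card_add] at hn
      rw [Multiset.card_add, Multiset.card_add]
      exact (ih _ (by omega) u v rfl hu hv huv).add (ih _ (by omega) p q rfl hp hq hpq)

/-- If every nonzero prime contains an r-good atom, then every nonzero element divides a product
of r-good atoms. -/
lemma exists_mul_eq_prod_good {A : Type*} [CommRing A] (r : ℕ)
    (H : ∀ P : Ideal A, P.IsPrime → P ≠ ⊥ → ∃ a ∈ P, IsRGoodAtom r a) (x : A) (hx : x ≠ 0) :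
    ∃ (c : A) (g : Multiset A), (∀ a ∈ g, IsRGoodAtom r a) ∧ x * c = g.prod := by
  by_cases hd : Disjoint (Ideal.span {x} : Set A) (Submonoid.closure {a : A | IsRGoodAtom r a})
  · obtain ⟨P, hP, hxP, hdis⟩ := Ideal.exists_le_prime_disjoint _ _ hd
    have hxP' : x ∈ P := hxP (Ideal.mem_span_singleton_self x)
    obtain ⟨a, haP, ha⟩ := H P hP (by rintro rfl; exact hx (by simpa using hxP'))
    exact (Set.disjoint_left.1 hdis haP (Submonoid.subset_closure ha)).elim
  · obtain ⟨y, hy, hyS⟩ := Set.not_disjoint_iff.1 hd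
    obtain ⟨c, rfl⟩ := Ideal.mem_span_singleton.1 hy
    obtain ⟨g, hg, hprod⟩ := Submonoid.exists_multiset_of_mem_closure hyS
    exact ⟨c, g, hg, hprod.symm⟩

/-- **Theorem 12.** Let `r > 1` be an integer. An atomic domain `A` is an
r-congruence half-factorial domain if and only if every nonzero prime ideal of `A`
contains an r-good atom. -/
theorem stmt_15 {A : Type*} [CommRing A] [IsDomain A] (r : ℕ) (hr : 1 < r)
    (hA : IsAtomicDomain A) :
    IsRCHFD A r ↔ ∀ P : Ideal A, P.IsPrime → P ≠ ⊥ → ∃ a ∈ P, IsRGoodAtom r a := by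
  constructor
  · rintro ⟨-, H⟩ P hP hP0
    obtain ⟨x, hxP, hx0⟩ := Submodule.exists_mem_ne_zero_of_ne_bot hP0
    have hxu : ¬ IsUnit x := fun hu => hP.ne_top (Ideal.eq_top_of_isUnit_mem P hxP hu)
    obtain ⟨s, hs, rfl⟩ := hA x hx0 hxu
    obtain ⟨a, has, haP⟩ := (Ideal.IsPrime.multiset_prod_mem_iff_exists_mem hP s).1 hxP
    refine ⟨a, haP, hs a has, ?_⟩
    rintro ⟨-, u, v, ⟨hu0, -, hu, hv, huv⟩, -, hbal, -⟩
    refine hbal (H u.prod ?_ ?_ u v hu hv rfl huv.symm)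
    · exact Multiset.prod_ne_zero fun h0 => not_irreducible_zero (hu 0 h0)
    · exact fun h => hu0 (eq_zero_of_isUnit_prod hu h)
  · refine fun H => ⟨hA, fun x hx _ s t hs ht hsx htx => ?_⟩
    obtain ⟨c, g, hg, hc⟩ := exists_mul_eq_prod_good r H x hx
    have hg0 : g.prod ≠ 0 := Multiset.prod_ne_zero fun h0 => not_irreducible_zero (hg 0 h0).1
    have hc0 : c ≠ 0 := by
      rintro rfl
      exact hg0 (by rw [← hc, mul_zero])
    obtain ⟨w, hw, hwc⟩ := exists_associated_prod hA c hc0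
    have key : ∀ s : Multiset A, (∀ a ∈ s, Irreducible a) → s.prod = x →
        Multiset.card s + Multiset.card w ≡ Multiset.card g [MOD r] := by
      intro s hs hsx
      rw [← Multiset.card_add]
      refine card_modEq_of_good r _ (s + w) g rfl ?_ hg ?_
      · intro a ha
        exact (Multiset.mem_add.1 ha).elim (hs a) (hw a)
      · rw [Multiset.prod_add, hsx, ← hc]
        exact hwc.mul_left x
    exact Nat.ModEq.add_right_cancel' _ ((key s hs hsx).trans (key t ht htx).symm)
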